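/- arXiv:1705.10905 — 2 statements merged into one kernel-verified Lean document; each statement's English description precedes it below -/
import Mathlib

section
/- Let f ∈ Z[X] with f not equal to 0, 1, or -1, and let A = Z[X]/(f). Let M be a finitely generated A-module which has no Z-torsion. Then Ext^1_A(M, A) = 0. -/
open CategoryTheory

/-!
Let `S = R[X]` with `R` Noetherian and let `M` be an `S`-module. The sequence
`0 → S ⊗[R] M → S ⊗[R] M → M → 0`, whose first map is `X ⊗ 1 - 1 ⊗ X`, is exact because divided
differences of powers of `X` split it over `R`. If `M` is flat over `R`, it is a resolution of `M`
by flat `S`-modules, so by Schanuel's argument the kernel `L` of any surjection `q : F → M` from a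
finite projective `S`-module is flat, hence projective.

Now let `f` be a nonzerodivisor of `S`, let `A = S ⧸ (f)`, and let `M` be an `A`-module. Given a
surjection `π : P → M` of `A`-modules and `φ : ker π → A`, lift `q` to `g : F → P` and lift
`φ ∘ g : L → A` to `ψ : L → S`. Since `f` kills `P`, `ψ (f • x)` is divisible by `f`, and
`x ↦ ψ (f • x) / f` extends `ψ` to `F`. Its reduction modulo `f` agrees with `φ ∘ g` on `L`, so it
glues with `φ` to a map `P → A`. As every `φ` extends, `Ext¹(M, A)` vanishes.
-/

open Polynomial TensorProduct

universe u v

section Extension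

variable {A M N P F : Type*} [Ring A] [AddCommGroup M] [Module A M] [AddCommGroup N] [Module A N]
  [AddCommGroup P] [Module A P] [AddCommGroup F] [Module A F]

theorem exists_linearMap_comp_eq_of_ker_le {g : M →ₗ[A] N} (hg : Function.Surjective g)
    {h : M →ₗ[A] P} (hle : g.ker ≤ h.ker) : ∃ k : N →ₗ[A] P, k ∘ₗ g = h := by
  refine ⟨g.ker.liftQ h hle ∘ₗ (g.quotKerEquivOfSurjective hg).symm, LinearMap.ext fun x ↦ ?_⟩
  have hx : (g.quotKerEquivOfSurjective hg).symm (g x) = g.ker.mkQ x :=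
    (LinearEquiv.symm_apply_eq _).mpr rfl
  simp [hx]

theorem exists_extend_of_range_sup_eq_top (K : Submodule A P) (φ : K →ₗ[A] N) {g : F →ₗ[A] P}
    (hg : g.range ⊔ K = ⊤) (θ : F →ₗ[A] N) (hθ : ∀ x (hx : g x ∈ K), θ x = φ ⟨g x, hx⟩) :
    ∃ Φ : P →ₗ[A] N, Φ ∘ₗ K.subtype = φ := by
  have hsurj : Function.Surjective (g.coprod K.subtype) := by
    rw [← LinearMap.range_eq_top, LinearMap.range_coprod, Submodule.range_subtype, hg]
  have hker : (g.coprod K.subtype).ker ≤ (θ.coprod φ).ker := by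
    rintro ⟨x, k⟩ hxk
    have hgx : g x = -k := eq_neg_of_add_eq_zero_left hxk
    have hx : g x ∈ K := hgx ▸ neg_mem k.2
    have hk : (⟨g x, hx⟩ : K) = -k := Subtype.ext hgx
    simp [hθ x hx, hk]
  obtain ⟨Φ, hΦ⟩ := exists_linearMap_comp_eq_of_ker_le hsurj hker
  refine ⟨Φ, LinearMap.ext fun k ↦ ?_⟩
  simpa using LinearMap.congr_fun hΦ (0, k)

end Extension

section FlatKernel

variable {A M N P Q : Type*} [CommRing A] [AddCommGroup M] [Module A M]
  [AddCommGroup N] [Module A N] [AddCommGroup P] [Module A P] [AddCommGroup Q] [Module A Q]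

theorem flat_prod [Module.Flat A N] [Module.Flat A P] : Module.Flat A (N × P) := by
  refine Module.Flat.iff_lTensor_injective'.mpr fun I ↦ ?_
  have hinj : Function.Injective ((I.subtype.lTensor N).prodMap (I.subtype.lTensor P)) :=
    (Module.Flat.lTensor_preserves_injective_linearMap _ I.subtype_injective).prodMap
      (Module.Flat.lTensor_preserves_injective_linearMap _ I.subtype_injective)
  have hcomm : TensorProduct.prodLeft A A N P A ∘ₗ I.subtype.lTensor (N × P) =
      (I.subtype.lTensor N).prodMap (I.subtype.lTensor P) ∘ₗ TensorProduct.prodLeft A A N P I :=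
    TensorProduct.ext' fun _ _ ↦ rfl
  refine Function.Injective.of_comp (f := TensorProduct.prodLeft A A N P A) ?_
  rw [← LinearEquiv.coe_coe, ← LinearMap.coe_comp, hcomm]
  exact hinj.comp (TensorProduct.prodLeft A A N P I).injective

theorem flat_ker_of_flat [Module.Flat A N] [Module.Flat A P] {g : N →ₗ[A] P}
    (hg : Function.Surjective g) : Module.Flat A g.ker := by
  refine Module.Flat.iff_lTensor_injective'.mpr fun I ↦ ?_
  have hker : Function.Injective (g.ker.subtype.rTensor I) := by
    rw [← LinearMap.lTensor_inj_iff_rTensor_inj]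
    exact LinearMap.lTensor_injective_of_exact_of_flat g hg _ g.ker.subtype_injective
      g.exact_subtype_ker_map I
  have hN : Function.Injective (I.subtype.lTensor N) :=
    Module.Flat.lTensor_preserves_injective_linearMap _ I.subtype_injective
  refine Function.Injective.of_comp (f := g.ker.subtype.rTensor A) ?_
  rw [← LinearMap.coe_comp, LinearMap.rTensor_comp_lTensor, ← LinearMap.lTensor_comp_rTensor]
  exact hN.comp hker

theorem flat_ker_of_projective_of_flat_ker [Module.Flat A Q] [Module.Projective A P]
    {p : Q →ₗ[A] M} (hp : Function.Surjective p) [Module.Flat A p.ker]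
    {q : P →ₗ[A] M} (hq : Function.Surjective q) : Module.Flat A q.ker := by
  obtain ⟨a, ha⟩ := Module.projective_lifting_property p q hp
  have hpa (x : P) : p (a x) = q x := LinearMap.congr_fun ha x
  let s : P × p.ker →ₗ[A] Q := a.coprod p.ker.subtype
  have hs : Function.Surjective s := fun y ↦ by
    obtain ⟨x, hx⟩ := hq (p y)
    exact ⟨(x, ⟨y - a x, by simp [hpa, hx]⟩), by simp [s]⟩
  have : Module.Flat A (P × p.ker) := flat_prod
  have : Module.Flat A s.ker := flat_ker_of_flat hs
  let i : q.ker →ₗ[A] s.ker :=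
    (q.ker.subtype.prod (-a.restrict (p := q.ker) (q := p.ker) (by simp [hpa]))).codRestrict _
      (by simp [s])
  let r : s.ker →ₗ[A] q.ker := (LinearMap.fst A P p.ker ∘ₗ s.ker.subtype).codRestrict _ (by
    rintro ⟨⟨x, k⟩, hx⟩
    have hxk : a x + (k : Q) = 0 := hx
    simpa [hpa, LinearMap.mem_ker.mp k.2] using congrArg p hxk)
  exact Module.Flat.of_retract i r rfl

end FlatKernel

section PolynomialModule

variable (R M : Type*) [CommRing R] [AddCommGroup M] [Module R M] [Module R[X] M]
  [IsScalarTower R R[X] M]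

/-- The augmentation `p ⊗ m ↦ p • m` of the resolution of an `R[X]`-module `M` by extended
modules. -/
noncomputable def polynomialAction : R[X] ⊗[R] M →ₗ[R[X]] M :=
  LinearMap.liftBaseChange R[X] LinearMap.id

/-- The differential `X ⊗ 1 - 1 ⊗ X` of the resolution of an `R[X]`-module `M` by extended
modules. -/
noncomputable def polynomialDifference : R[X] ⊗[R] M →ₗ[R[X]] R[X] ⊗[R] M :=
  (X : R[X]) • LinearMap.id - (Algebra.lsmul R R M (X : R[X])).baseChange R[X]

/-- The divided difference `(X ^ n ⊗ 1 - 1 ⊗ X ^ n) / (X ⊗ 1 - 1 ⊗ X)` applied to `1 ⊗ m`, that is,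
`∑ X ^ i ⊗ X ^ j • m` over `i + j = n - 1`. -/
noncomputable def dividedDifference : ℕ → M →ₗ[R] R[X] ⊗[R] M
  | 0 => 0
  | n + 1 =>
    TensorProduct.mk R R[X] M (X ^ n) + dividedDifference n ∘ₗ Algebra.lsmul R R M (X : R[X])

/-- The `R`-linear map `X ^ n ⊗ m ↦ dividedDifference R M n m`, a contracting homotopy for
`polynomialDifference`. -/
noncomputable def polynomialHomotopy : R[X] ⊗[R] M →ₗ[R] R[X] ⊗[R] M :=
  TensorProduct.lift
    (Polynomial.lsum fun n ↦ LinearMap.toSpanSingleton R _ (dividedDifference R M n))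

@[simp]
theorem polynomialAction_tmul (p : R[X]) (m : M) :
    polynomialAction R M (p ⊗ₜ m) = p • m := by
  simp [polynomialAction]

@[simp]
theorem polynomialDifference_tmul (p : R[X]) (m : M) :
    polynomialDifference R M (p ⊗ₜ m) = (X * p) ⊗ₜ m - p ⊗ₜ ((X : R[X]) • m) := by
  simp [polynomialDifference, TensorProduct.smul_tmul']

@[simp]
theorem polynomialHomotopy_X_pow_tmul (n : ℕ) (m : M) :
    polynomialHomotopy R M ((X ^ n) ⊗ₜ m) = dividedDifference R M n m := by
  simp [polynomialHomotopy, Polynomial.lsum_apply, X_pow_eq_monomial, sum_monomial_index]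

theorem polynomialDifference_dividedDifference (n : ℕ) (m : M) :
    polynomialDifference R M (dividedDifference R M n m) =
      (X ^ n) ⊗ₜ m - 1 ⊗ₜ ((X ^ n : R[X]) • m) := by
  induction n generalizing m with
  | zero => simp [dividedDifference]
  | succ n ih => simp [dividedDifference, ih, pow_succ', smul_smul, ← pow_succ]

theorem polynomialHomotopy_polynomialDifference (t : R[X] ⊗[R] M) :
    polynomialHomotopy R M (polynomialDifference R M t) = t := by
  suffices h : polynomialHomotopy R M ∘ₗ (polynomialDifference R M).restrictScalars R =
      LinearMap.id from LinearMap.congr_fun h t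
  ext n m
  simp [dividedDifference, ← X_pow_eq_monomial, ← pow_succ']

theorem polynomialDifference_polynomialHomotopy (t : R[X] ⊗[R] M) :
    polynomialDifference R M (polynomialHomotopy R M t) = t - 1 ⊗ₜ polynomialAction R M t := by
  suffices h : (polynomialDifference R M).restrictScalars R ∘ₗ polynomialHomotopy R M =
      LinearMap.id - TensorProduct.mk R R[X] M 1 ∘ₗ (polynomialAction R M).restrictScalars R from
    LinearMap.congr_fun h t
  ext n m
  simp [polynomialDifference_dividedDifference, ← X_pow_eq_monomial]

theorem polynomialDifference_injective : Function.Injective (polynomialDifference R M) :=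
  Function.LeftInverse.injective (polynomialHomotopy_polynomialDifference R M)

theorem range_polynomialDifference :
    (polynomialDifference R M).range = (polynomialAction R M).ker := by
  apply le_antisymm
  · rw [LinearMap.range_le_ker_iff]
    ext m
    simp
  · exact fun t ht ↦ ⟨polynomialHomotopy R M t, by
      simp [polynomialDifference_polynomialHomotopy, LinearMap.mem_ker.mp ht]⟩

theorem polynomialAction_surjective : Function.Surjective (polynomialAction R M) :=
  fun m ↦ ⟨1 ⊗ₜ m, by simp⟩

theorem flat_ker_polynomialAction [Module.Flat R M] :
    Module.Flat R[X] (polynomialAction R M).ker := by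
  rw [← range_polynomialDifference]
  exact .of_linearEquiv (LinearEquiv.ofInjective _ (polynomialDifference_injective R M)).symm

variable {M}

theorem projective_ker_of_flat [IsNoetherianRing R] [Module.Flat R M] {F : Type*}
    [AddCommGroup F] [Module R[X] F] [Module.Finite R[X] F] [Module.Projective R[X] F]
    {q : F →ₗ[R[X]] M} (hq : Function.Surjective q) : Module.Projective R[X] q.ker := by
  have := flat_ker_polynomialAction R M
  have : Module.Flat R[X] q.ker :=
    flat_ker_of_projective_of_flat_ker (polynomialAction_surjective R M) hq
  have := Module.finitePresentation_of_finite R[X] q.ker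
  exact Module.Flat.projective_of_finitePresentation

end PolynomialModule

section QuotientExtension

variable {S P M F : Type*} [CommRing S] [AddCommGroup P] [Module S P] [AddCommGroup F]
  [Module S F] [AddCommGroup M] [Module S M] {f : S}

theorem exists_extend_of_dvd_smul (hf : f ∈ nonZeroDivisors S) (L : Submodule S F)
    (hL : ∀ x : F, f • x ∈ L) (ψ : L →ₗ[S] S) (hψ : ∀ x, f ∣ ψ ⟨f • x, hL x⟩) :
    ∃ c : F →ₗ[S] S, c ∘ₗ L.subtype = ψ := by
  have hinj : Function.Injective (LinearMap.mulLeft S f) := fun a b hab ↦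
    (mul_cancel_left_mem_nonZeroDivisors hf).mp hab
  let ψf : F →ₗ[S] S := ψ ∘ₗ (LinearMap.lsmul S F f).codRestrict L hL
  have hmem (x : F) : ψf x ∈ (LinearMap.mulLeft S f).range :=
    (hψ x).imp fun _ h ↦ h.symm
  let c : F →ₗ[S] S := (LinearEquiv.ofInjective _ hinj).symm ∘ₗ ψf.codRestrict _ hmem
  have hc (x : F) : f * c x = ψf x :=
    congrArg Subtype.val ((LinearEquiv.ofInjective _ hinj).apply_symm_apply ⟨ψf x, hmem x⟩)
  refine ⟨c, LinearMap.ext fun l ↦ hinj ?_⟩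
  have hψl : ψf l = f * ψ l := map_smul ψ f l
  exact (hc l).trans hψl

theorem exists_extend_of_map_smul_eq_zero (hf : f ∈ nonZeroDivisors S) (L : Submodule S F)
    [Module.Projective S L] (hL : ∀ x : F, f • x ∈ L) (χ : L →ₗ[S] S ⧸ Ideal.span {f})
    (hχ : ∀ x, χ ⟨f • x, hL x⟩ = 0) :
    ∃ θ : F →ₗ[S] S ⧸ Ideal.span {f}, θ ∘ₗ L.subtype = χ := by
  let red := (Ideal.span {f}).mkQ
  obtain ⟨ψ, hψ⟩ := Module.projective_lifting_property red χ (Submodule.mkQ_surjective _)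
  have hdvd (x : F) : f ∣ ψ ⟨f • x, hL x⟩ := by
    rw [← Ideal.mem_span_singleton, ← Submodule.Quotient.mk_eq_zero, ← hχ x, ← hψ]
    rfl
  obtain ⟨c, hc⟩ := exists_extend_of_dvd_smul hf L hL ψ hdvd
  exact ⟨red ∘ₗ c, by rw [LinearMap.comp_assoc, hc, hψ]⟩

variable [Module (S ⧸ Ideal.span {f}) M] [IsScalarTower S (S ⧸ Ideal.span {f}) M]
  [Module (S ⧸ Ideal.span {f}) P] [IsScalarTower S (S ⧸ Ideal.span {f}) P]

theorem smul_eq_zero_of_quotient_span_singleton (m : M) : f • m = 0 := by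
  rw [← algebraMap_smul (S ⧸ Ideal.span {f}) f m]
  simp

theorem exists_extend_of_projective_ker (hf : f ∈ nonZeroDivisors S) [Module.Projective S F]
    {q : F →ₗ[S] M} (hq : Function.Surjective q) [Module.Projective S q.ker]
    {π : P →ₗ[S ⧸ Ideal.span {f}] M} (hπ : Function.Surjective π)
    (φ : π.ker →ₗ[S ⧸ Ideal.span {f}] S ⧸ Ideal.span {f}) :
    ∃ Φ : P →ₗ[S ⧸ Ideal.span {f}] S ⧸ Ideal.span {f}, Φ ∘ₗ π.ker.subtype = φ := by
  obtain ⟨g, hg⟩ := Module.projective_lifting_property (π.restrictScalars S) q hπ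
  have hπg (x : F) : π (g x) = q x := LinearMap.congr_fun hg x
  let K : Submodule S P := π.ker.restrictScalars S
  let φS : K →ₗ[S] S ⧸ Ideal.span {f} := φ.restrictScalars S
  have hgK (x : F) (hx : x ∈ q.ker) : g x ∈ K := (hπg x).trans hx
  have hsmul (x : F) : f • x ∈ q.ker := by
    rw [LinearMap.mem_ker, map_smul, smul_eq_zero_of_quotient_span_singleton]
  have hg_smul (x : F) : g.restrict hgK ⟨f • x, hsmul x⟩ = 0 :=
    Subtype.ext ((map_smul g f x).trans (smul_eq_zero_of_quotient_span_singleton _))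
  obtain ⟨θ, hθ⟩ := exists_extend_of_map_smul_eq_zero hf q.ker hsmul (φS ∘ₗ g.restrict hgK)
    fun x ↦ by rw [LinearMap.comp_apply, hg_smul, map_zero]
  have htop : g.range ⊔ K = ⊤ := by
    refine eq_top_iff.mpr fun y _ ↦ ?_
    obtain ⟨x, hx⟩ := hq (π y)
    have hyx : y - g x ∈ K := by simp [K, hπg, hx]
    simpa using Submodule.add_mem_sup (LinearMap.mem_range_self g x) hyx
  obtain ⟨Φ, hΦ⟩ := exists_extend_of_range_sup_eq_top K φS htop θ fun x hx ↦
    LinearMap.congr_fun hθ ⟨x, (hπg x).symm.trans hx⟩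
  exact ⟨Φ.extendScalarsOfSurjective Ideal.Quotient.mk_surjective,
    LinearMap.ext fun k ↦ LinearMap.congr_fun hΦ k⟩

end QuotientExtension

theorem subsingleton_ext_one_of_exists_extend {A : Type u} [CommRing A] [Small.{v} A]
    {M Y : Type v} [AddCommGroup M] [Module A M] [AddCommGroup Y] [Module A Y]
    (hext : ∀ (P : Type v) [AddCommGroup P] [Module A P] (π : P →ₗ[A] M),
      Function.Surjective π → ∀ φ : π.ker →ₗ[A] Y, ∃ Φ : P →ₗ[A] Y, Φ ∘ₗ π.ker.subtype = φ) :
    Subsingleton (((Ext A (ModuleCat.{v} A) 1).obj (Opposite.op (ModuleCat.of A M))).obj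
      (ModuleCat.of A Y)) := by
  let C := ProjectiveResolution.of (ModuleCat.of A M)
  suffices h : Limits.IsZero (((Ext A (ModuleCat.{v} A) 1).obj
      (Opposite.op (ModuleCat.of A M))).obj (ModuleCat.of A Y)) from
    ModuleCat.subsingleton_of_isZero h
  refine Limits.IsZero.of_iso ?_ (C.isoExt 1 (ModuleCat.of A Y))
  rw [← HomologicalComplex.exactAt_iff_isZero_homology,
    HomologicalComplex.exactAt_iff' _ 0 1 2 (by simp) (by simp), ShortComplex.moduleCat_exact_iff]
  intro (ψ : C.complex.X 1 ⟶ ModuleCat.of A Y) (hψ : C.complex.d 2 1 ≫ ψ = 0)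
  let π : C.complex.X 0 →ₗ[A] M := (C.π.f 0).hom
  have hπ : Function.Surjective π := (ModuleCat.epi_iff_surjective (C.π.f 0)).mp inferInstance
  let δ : C.complex.X 1 →ₗ[A] π.ker := (C.complex.d 1 0).hom.codRestrict _ fun x ↦
    ConcreteCategory.congr_hom C.complex_d_comp_π_f_zero x
  have hδ : Function.Surjective δ := fun ⟨x, hx⟩ ↦
    ((ShortComplex.moduleCat_exact_iff _).mp C.exact₀ x hx).imp fun _ hy ↦ Subtype.ext hy
  have hker : δ.ker ≤ ψ.hom.ker := fun x hx ↦ by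
    obtain ⟨y, rfl⟩ := (ShortComplex.moduleCat_exact_iff _).mp (C.exact_succ 0) x
      (congrArg Subtype.val hx)
    exact ConcreteCategory.congr_hom hψ y
  obtain ⟨φ, hφ⟩ := exists_linearMap_comp_eq_of_ker_le hδ hker
  obtain ⟨Φ, hΦ⟩ := hext _ π hπ φ
  have hcomp : C.complex.d 1 0 ≫ ModuleCat.ofHom Φ = ψ := by
    ext x
    exact (LinearMap.congr_fun hΦ (δ x)).trans (LinearMap.congr_fun hφ x)
  exact ⟨ModuleCat.ofHom Φ, hcomp⟩

theorem stmt_2_general {R : Type u} [CommRing R] [IsNoetherianRing R] {f : R[X]}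
    (hf : f ∈ nonZeroDivisors R[X]) (M : Type u) [AddCommGroup M] [Module R M]
    [Module (R[X] ⧸ Ideal.span {f}) M] [IsScalarTower R (R[X] ⧸ Ideal.span {f}) M]
    [Module.Finite (R[X] ⧸ Ideal.span {f}) M] [Module.Flat R M] :
    Subsingleton
      (((Ext (R[X] ⧸ Ideal.span {f}) (ModuleCat.{u} (R[X] ⧸ Ideal.span {f})) 1).obj
          (Opposite.op (ModuleCat.of (R[X] ⧸ Ideal.span {f}) M))).obj
        (ModuleCat.of (R[X] ⧸ Ideal.span {f}) (R[X] ⧸ Ideal.span {f}))) := by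
  let A := R[X] ⧸ Ideal.span {f}
  let _ : Module R[X] M := Module.compHom M (algebraMap R[X] A)
  have : IsScalarTower R[X] A M := .of_compHom R[X] A M
  have : IsScalarTower R R[X] M := .to₁₂₄ R R[X] A M
  have : Module.Finite R[X] M := .trans A M
  obtain ⟨n, q, hq⟩ := Module.Finite.exists_fin' R[X] M
  have := projective_ker_of_flat R hq
  refine subsingleton_ext_one_of_exists_extend fun P _ _ π hπ φ ↦ ?_
  let _ : Module R[X] P := Module.compHom P (algebraMap R[X] A)
  have : IsScalarTower R[X] A P := .of_compHom R[X] A P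
  exact exists_extend_of_projective_ker hf hq hπ φ

/-- If `A = ℤ[X]/(f)` with `f ∉ {0, 1, -1}` and `M` is a finitely generated `A`-module
with no `ℤ`-torsion, then `Ext¹_A(M, A) = 0`. -/
theorem stmt_2 (f : Polynomial ℤ) (hf0 : f ≠ 0) (hf1 : f ≠ 1) (hfm1 : f ≠ -1)
    (M : Type) [AddCommGroup M]
    [Module (Polynomial ℤ ⧸ Ideal.span {f}) M]
    (hfg : Module.Finite (Polynomial ℤ ⧸ Ideal.span {f}) M)
    (htf : ∀ (c : ℤ), c ≠ 0 → ∀ m : M, c • m = 0 → m = 0) :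
    Subsingleton
      (((Ext (Polynomial ℤ ⧸ Ideal.span {f}) (ModuleCat (Polynomial ℤ ⧸ Ideal.span {f})) 1).obj
          (Opposite.op (ModuleCat.of (Polynomial ℤ ⧸ Ideal.span {f}) M))).obj
        (ModuleCat.of (Polynomial ℤ ⧸ Ideal.span {f})
          (Polynomial ℤ ⧸ Ideal.span {f}))) := by
  have : Module.IsTorsionFree ℤ M := .of_smul_eq_zero fun c m h ↦
    or_iff_not_imp_left.mpr fun hc ↦ htf c hc m h
  exact stmt_2_general (mem_nonZeroDivisors_of_ne_zero hf0) M
end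

section
/- Let f ∈ Z[X] with f ∉ {0,1,-1}, A = Z[X]/(f), and let M be a finitely generated A-module without Z-torsion. Let y be a nonzerodivisor in A and x ∈ M. Then x ∈ yM if and only if for every A-linear map φ: M → A, one has φ(x) ∈ yA. -/
/-!
Let `R` be `ℤ`, or any Noetherian ring over which `M` is flat. Write `S = R[X]`, `A = S ⧸ (f)`, and
choose a presentation `0 → K → F → M → 0` over `S` with `F` free of finite rank. The exact sequence
`0 → S ⊗[R] M → S ⊗[R] M → M → 0` whose first map is `X ⊗ 1 - 1 ⊗ X` shows that `M` has flat
dimension at most one over `S`; hence `K` is flat, and so projective. Since `f` kills `M`,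
multiplication by `f` maps `F` into `K` and induces an exact sequence of `A`-modules
`0 → M → K ⧸ fK → F ⧸ fF`. If every functional on `M` sends `x` into `yA`, then so does every
functional on the projective `A`-module `K ⧸ fK` applied to the image of `x`, so this image is
`y • u` for some `u`; as `y` acts injectively on `F ⧸ fF`, this `u` comes from `M`.
-/

open Polynomial TensorProduct Function
open scoped nonZeroDivisors Pointwise

section Flat

variable {R K L M N P Q : Type*} [CommRing R]
  [AddCommGroup K] [AddCommGroup L] [AddCommGroup M] [AddCommGroup N] [AddCommGroup P]
  [AddCommGroup Q] [Module R K] [Module R L] [Module R M] [Module R N] [Module R P] [Module R Q]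

lemma flat_left_of_exact [Module.Flat R N] [Module.Flat R P] {i : K →ₗ[R] N} {q : N →ₗ[R] P}
    (hi : Injective i) (hq : Surjective q) (hiq : Exact i q) : Module.Flat R K := by
  refine Module.Flat.iff_rTensor_injective'.mpr fun I ↦ ?_
  have hcomp : Injective (I.subtype.rTensor N ∘ₗ i.lTensor I) :=
    (Module.Flat.rTensor_preserves_injective_linearMap I.subtype I.injective_subtype).comp
      (LinearMap.lTensor_injective_of_exact_of_flat q hq i hi hiq I)
  rw [LinearMap.rTensor_comp_lTensor, ← LinearMap.lTensor_comp_rTensor] at hcomp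
  exact Injective.of_comp hcomp

lemma flat_middle_of_exact [Module.Flat R K] [Module.Flat R P] {i : K →ₗ[R] N} {q : N →ₗ[R] P}
    (hi : Injective i) (hq : Surjective q) (hiq : Exact i q) : Module.Flat R N := by
  refine Module.Flat.iff_rTensor_injective'.mpr fun I ↦ (injective_iff_map_eq_zero _).mpr ?_
  intro t ht
  have hqt : q.lTensor I t = 0 := by
    apply Module.Flat.rTensor_preserves_injective_linearMap (M := P) _ I.injective_subtype
    rw [map_zero, ← LinearMap.comp_apply, LinearMap.rTensor_comp_lTensor,
      ← LinearMap.lTensor_comp_rTensor, LinearMap.comp_apply, ht, map_zero]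
  obtain ⟨k, rfl⟩ := (lTensor_exact I hiq hq t).mp hqt
  have hcomp : Injective (i.lTensor R ∘ₗ I.subtype.rTensor K) :=
    (LinearMap.lTensor_injective_of_exact_of_flat q hq i hi hiq R).comp
      (Module.Flat.rTensor_preserves_injective_linearMap I.subtype I.injective_subtype)
  rw [LinearMap.lTensor_comp_rTensor, ← LinearMap.rTensor_comp_lTensor] at hcomp
  rw [(injective_iff_map_eq_zero _).mp hcomp k ht, map_zero]

-- As in Schanuel's lemma, compare both presentations with the fibre product `P ×_M Q`.
lemma flat_ker_of_exact [Module.Flat R L] [Module.Flat R P] [Module.Flat R Q]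
    {d : L →ₗ[R] Q} {q : Q →ₗ[R] M} {p : P →ₗ[R] M} (hd : Injective d) (hq : Surjective q)
    (hdq : Exact d q) (hp : Surjective p) : Module.Flat R (LinearMap.ker p) := by
  let W := LinearMap.eqLocus (p ∘ₗ LinearMap.fst R P Q) (q ∘ₗ LinearMap.snd R P Q)
  let toP : W →ₗ[R] P := LinearMap.fst R P Q ∘ₗ W.subtype
  let toQ : W →ₗ[R] Q := LinearMap.snd R P Q ∘ₗ W.subtype
  let ofL : L →ₗ[R] W := (LinearMap.inr R P Q ∘ₗ d).codRestrict W fun l ↦ by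
    simp [W, hdq.apply_apply_eq_zero]
  let ofKer : LinearMap.ker p →ₗ[R] W :=
    (LinearMap.inl R P Q ∘ₗ (LinearMap.ker p).subtype).codRestrict W fun k ↦ by simp [W]
  have : Module.Flat R W := by
    refine flat_middle_of_exact (i := ofL) (q := toP) ?_ ?_ ?_
    · exact fun l l' h ↦ hd (congrArg toQ h)
    · intro a
      obtain ⟨b, hb⟩ := hq (p a)
      exact ⟨⟨(a, b), hb.symm⟩, rfl⟩
    · rintro ⟨⟨a, b⟩, hab⟩
      replace hab : p a = q b := hab
      constructor
      · rintro (rfl : a = 0)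
        obtain ⟨l, rfl⟩ := (hdq b).mp (by rw [← hab, map_zero])
        exact ⟨l, rfl⟩
      · rintro ⟨l, hl⟩
        exact (congrArg toP hl).symm
  refine flat_left_of_exact (i := ofKer) (q := toQ) ?_ ?_ ?_
  · exact fun k k' h ↦ Subtype.ext (congrArg toP h)
  · intro b
    obtain ⟨a, ha⟩ := hp (q b)
    exact ⟨⟨(a, b), ha⟩, rfl⟩
  · rintro ⟨⟨a, b⟩, hab⟩
    replace hab : p a = q b := hab
    constructor
    · rintro (rfl : b = 0)
      exact ⟨⟨a, by rw [LinearMap.mem_ker, hab, map_zero]⟩, rfl⟩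
    · rintro ⟨k, hk⟩
      exact (congrArg toQ hk).symm

end Flat

section CharacteristicSequence

variable (R M : Type*) [CommRing R] [AddCommGroup M] [Module R M] [Module R[X] M]
  [IsScalarTower R R[X] M]

/-- The endomorphism `X ⊗ 1 - 1 ⊗ X` of `R[X] ⊗[R] M`, for an `R[X]`-module `M`. -/
noncomputable def charMap : R[X] ⊗[R] M →ₗ[R[X]] R[X] ⊗[R] M :=
  (X : R[X]) • LinearMap.id - ((LinearMap.lsmul R[X] M X).restrictScalars R).baseChange R[X]

/-- The action map `r ⊗ m ↦ r • m`, the augmentation of the resolution of `M` by `charMap`. -/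
noncomputable def actionMap : R[X] ⊗[R] M →ₗ[R[X]] M :=
  LinearMap.liftBaseChange R[X] LinearMap.id

variable {R M}

@[simp]
lemma charMap_tmul (r : R[X]) (m : M) :
    charMap R M (r ⊗ₜ m) = (X * r) ⊗ₜ m - r ⊗ₜ ((X : R[X]) • m) := by
  simp [charMap, TensorProduct.smul_tmul']

@[simp]
lemma actionMap_tmul (r : R[X]) (m : M) : actionMap R M (r ⊗ₜ m) = r • m := by
  simp [actionMap]

lemma actionMap_surjective : Surjective (actionMap R M) := fun m ↦ ⟨1 ⊗ₜ m, by simp⟩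

lemma actionMap_comp_charMap : actionMap R M ∘ₗ charMap R M = 0 := by
  ext m
  simp

lemma tmul_sub_one_tmul_smul_mem_range_charMap (r : R[X]) (m : M) :
    r ⊗ₜ m - 1 ⊗ₜ (r • m) ∈ LinearMap.range (charMap R M) := by
  induction r using Polynomial.induction_on generalizing m with
  | C a =>
    rw [← mul_one (C a), ← smul_eq_C_mul, smul_tmul, smul_assoc, one_smul, sub_self]
    exact zero_mem _
  | add p q hp hq =>
    rw [add_tmul, add_smul, tmul_add, add_sub_add_comm]
    exact add_mem (hp m) (hq m)
  | monomial n a ih =>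
    have hX : X * (C a * X ^ n) = C a * X ^ (n + 1) := by ring
    have hsum := add_mem (ih ((X : R[X]) • m)) ⟨(C a * X ^ n) ⊗ₜ m, rfl⟩
    rwa [charMap_tmul, smul_smul, hX, mul_assoc, ← pow_succ, add_comm,
      sub_add_sub_cancel] at hsum

lemma charMap_actionMap_exact : Exact (charMap R M) (actionMap R M) := by
  refine fun t ↦ ⟨fun ht ↦ ?_, ?_⟩
  · have hmem (t : R[X] ⊗[R] M) : t - 1 ⊗ₜ actionMap R M t ∈ LinearMap.range (charMap R M) := by
      induction t with
      | zero => simp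
      | add s t hs ht =>
        rw [map_add, tmul_add, add_sub_add_comm]
        exact add_mem hs ht
      | tmul r m => simpa using tmul_sub_one_tmul_smul_mem_range_charMap r m
    simpa [ht] using hmem t
  · rintro ⟨s, rfl⟩
    exact LinearMap.congr_fun actionMap_comp_charMap s

-- A nonzero element of the kernel would have a top coefficient, which the recurrence sends to zero.
lemma charMap_injective : Injective (charMap R M) := by
  classical
  let coeffs := TensorProduct.equivFinsuppOfBasisLeft (N := M) (Polynomial.basisMonomials R)
  have coeffs_charMap (t : R[X] ⊗[R] M) (n : ℕ) :
      coeffs (charMap R M t) (n + 1) = coeffs t n - (X : R[X]) • coeffs t (n + 1) := by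
    induction t with
    | zero => simp
    | add s t hs ht => simp only [map_add, Finsupp.add_apply, hs, ht, smul_add]; abel
    | tmul r m =>
      have hrepr (p : R[X]) (k : ℕ) : (basisMonomials R).repr p k = p.coeff k := rfl
      simp only [coeffs, charMap_tmul, map_sub, Finsupp.sub_apply,
        equivFinsuppOfBasisLeft_apply_tmul_apply, hrepr, coeff_X_mul]
      rw [smul_comm]
  refine (injective_iff_map_eq_zero _).mpr fun t ht ↦ ?_
  have recurrence (n : ℕ) : coeffs t n = (X : R[X]) • coeffs t (n + 1) := by
    exact sub_eq_zero.mp (by rw [← coeffs_charMap, ht, map_zero, Finsupp.zero_apply])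
  by_contra ht0
  obtain ⟨n, hn, hmax⟩ := (coeffs t).support.exists_max_image id
    (Finsupp.support_nonempty_iff.mpr ((map_ne_zero_iff coeffs coeffs.injective).mpr ht0))
  refine Finsupp.mem_support_iff.mp hn ?_
  rw [recurrence, Finsupp.notMem_support_iff.mp fun h ↦ (Nat.lt_succ_self n).not_ge (hmax _ h),
    smul_zero]

lemma flat_ker_of_flat_coeff [Module.Flat R M] {F : Type*} [AddCommGroup F] [Module R[X] F]
    [Module.Flat R[X] F] {p : F →ₗ[R[X]] M} (hp : Surjective p) :
    Module.Flat R[X] (LinearMap.ker p) :=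
  flat_ker_of_exact charMap_injective actionMap_surjective charMap_actionMap_exact hp

end CharacteristicSequence

section DualDivisibility

variable {A M P Q : Type*} [CommRing A] [AddCommGroup M] [Module A M] [AddCommGroup P] [Module A P]
  [AddCommGroup Q] [Module A Q]

lemma mem_smul_top_of_forall_dual_mem [Module.Projective A P] {J : Ideal A} {u : P}
    (hu : ∀ ψ : P →ₗ[A] A, ψ u ∈ J) : u ∈ J • (⊤ : Submodule A P) := by
  obtain ⟨s, hs⟩ := Module.Projective.out (R := A) (P := P)
  rw [← hs u, Finsupp.linearCombination_apply]
  exact Submodule.sum_mem _ fun k _ ↦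
    Submodule.smul_mem_smul (hu (Finsupp.lapply k ∘ₗ s)) Submodule.mem_top

lemma exists_eq_smul_of_exact_of_forall_dual_mem [Module.Projective A P] {i : M →ₗ[A] P}
    {j : P →ₗ[A] Q} (hi : Injective i) (hij : Exact i j) {y : A} (hy : IsSMulRegular Q y) {x : M}
    (hx : ∀ φ : M →ₗ[A] A, φ x ∈ Ideal.span {y}) : ∃ m, x = y • m := by
  have hix : i x ∈ Ideal.span {y} • (⊤ : Submodule A P) :=
    mem_smul_top_of_forall_dual_mem fun ψ ↦ hx (ψ ∘ₗ i)
  rw [Submodule.ideal_span_singleton_smul, Submodule.mem_smul_pointwise_iff_exists] at hix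
  obtain ⟨u, -, hu⟩ := hix
  have hju : j u = 0 := hy.right_eq_zero_of_smul (by rw [← map_smul, hu, hij.apply_apply_eq_zero])
  obtain ⟨m, rfl⟩ := (hij u).mp hju
  exact ⟨m, hi (by rw [map_smul, hu])⟩

end DualDivisibility

section Quotient

variable {S F M : Type*} [CommRing S] [AddCommGroup F] [Module S F] [AddCommGroup M] [Module S M]
  {f : S}

instance [Module.Projective S F] : Module.Projective (S ⧸ Ideal.span {f}) (QuotSMulTop f F) :=
  .of_equiv' ((QuotSMulTop.equivQuotTensor f F).extendScalarsOfSurjective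
    Ideal.Quotient.mk_surjective).symm

instance [Module.Flat S F] : Module.Flat (S ⧸ Ideal.span {f}) (QuotSMulTop f F) :=
  .of_linearEquiv ((QuotSMulTop.equivQuotTensor f F).extendScalarsOfSurjective
    Ideal.Quotient.mk_surjective)

/-- For `fF ⊆ K ⊆ F`, the map `F ⧸ K → K ⧸ fK` induced by multiplication by `f`: the connecting map
of the snake lemma for multiplication by `f` on `0 → K → F → F ⧸ K → 0`. -/
def mulToQuotSMulTop {K : Submodule S F} (hK : ∀ z : F, f • z ∈ K) :
    F ⧸ K →ₗ[S] QuotSMulTop f K :=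
  K.mapQ _ ((LinearMap.lsmul S F f).codRestrict K hK) fun k hk ↦
    Submodule.smul_mem_pointwise_smul (⟨k, hk⟩ : K) f ⊤ Submodule.mem_top

lemma mulToQuotSMulTop_injective {K : Submodule S F} (hK : ∀ z : F, f • z ∈ K)
    (hf : IsSMulRegular F f) : Injective (mulToQuotSMulTop hK) := by
  refine (injective_iff_map_eq_zero _).mpr (K.mkQ_surjective.forall.mpr fun z hz ↦ ?_)
  obtain ⟨k, -, hk⟩ := (Submodule.mem_smul_pointwise_iff_exists _ _ _).mp
    ((Submodule.Quotient.mk_eq_zero _).mp hz)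
  have hkz : (k : F) = z := hf (congrArg Subtype.val hk)
  exact (Submodule.Quotient.mk_eq_zero K).mpr (hkz ▸ k.2)

lemma mulToQuotSMulTop_exact {K : Submodule S F} (hK : ∀ z : F, f • z ∈ K) :
    Exact (mulToQuotSMulTop hK) (QuotSMulTop.map f K.subtype) := by
  refine (Submodule.mkQ_surjective _).forall.mpr fun k ↦ ?_
  rw [Submodule.mkQ_apply, QuotSMulTop.map_apply_mk, Submodule.Quotient.mk_eq_zero,
    Submodule.mem_smul_pointwise_iff_exists, Set.mem_range, K.mkQ_surjective.exists]
  constructor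
  · rintro ⟨z, -, hz⟩
    exact ⟨z, congrArg Submodule.Quotient.mk (Subtype.ext hz)⟩
  · rintro ⟨z, hz⟩
    obtain ⟨l, -, hl⟩ := (Submodule.mem_smul_pointwise_iff_exists _ _ _).mp
      ((Submodule.Quotient.eq _).mp hz)
    have hl' : f • (l : F) = f • z - k := congrArg Subtype.val hl
    exact ⟨z - l, Submodule.mem_top, by rw [smul_sub, hl', sub_sub_cancel, Submodule.subtype_apply]⟩

variable [Module (S ⧸ Ideal.span {f}) M] [IsScalarTower S (S ⧸ Ideal.span {f}) M]

lemma exists_eq_smul_of_projective_ker_of_forall_dual_mem [Module.Flat S F] (hf : f ∈ S⁰)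
    {p : F →ₗ[S] M} (hp : Surjective p) [Module.Projective S (LinearMap.ker p)]
    {y : S ⧸ Ideal.span {f}} (hy : y ∈ (S ⧸ Ideal.span {f})⁰) {x : M}
    (hx : ∀ φ : M →ₗ[S ⧸ Ideal.span {f}] (S ⧸ Ideal.span {f}), φ x ∈ Ideal.span {y}) :
    ∃ m, x = y • m := by
  have hfM (m : M) : f • m = 0 := by
    rw [← algebraMap_smul (S ⧸ Ideal.span {f}), Ideal.Quotient.algebraMap_eq,
      Ideal.Quotient.mk_singleton_self, zero_smul]
  have hfF (z : F) : f • z ∈ LinearMap.ker p := by rw [LinearMap.mem_ker, map_smul, hfM]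
  let e := (p.quotKerEquivOfSurjective hp).symm
  let i : M →ₗ[S] QuotSMulTop f (LinearMap.ker p) := mulToQuotSMulTop hfF ∘ₗ e
  let j := QuotSMulTop.map f (LinearMap.ker p).subtype
  have hi : Injective i :=
    (mulToQuotSMulTop_injective hfF (Module.Flat.isSMulRegular_of_nonZeroDivisors hf)).comp
      e.injective
  have hij : Exact i j := e.precomp_exact_iff_exact.mpr (mulToQuotSMulTop_exact hfF)
  exact exists_eq_smul_of_exact_of_forall_dual_mem (A := S ⧸ Ideal.span {f})
    (i := i.extendScalarsOfSurjective Ideal.Quotient.mk_surjective)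
    (j := j.extendScalarsOfSurjective Ideal.Quotient.mk_surjective)
    hi hij (Module.Flat.isSMulRegular_of_nonZeroDivisors hy) hx

end Quotient

theorem stmt_3_general {R : Type*} [CommRing R] [IsNoetherianRing R] {f : R[X]} (hf : f ∈ R[X]⁰)
    {M : Type*} [AddCommGroup M] [Module (R[X] ⧸ Ideal.span {f}) M]
    [Module.Finite (R[X] ⧸ Ideal.span {f}) M] [Module R M]
    [IsScalarTower R (R[X] ⧸ Ideal.span {f}) M] [Module.Flat R M] {y : R[X] ⧸ Ideal.span {f}}
    (hy : y ∈ (R[X] ⧸ Ideal.span {f})⁰) (x : M) :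
    (∃ m : M, x = y • m) ↔
      ∀ φ : M →ₗ[R[X] ⧸ Ideal.span {f}] (R[X] ⧸ Ideal.span {f}), φ x ∈ Ideal.span {y} := by
  refine ⟨?_, fun hx ↦ ?_⟩
  · rintro ⟨m, rfl⟩ φ
    rw [map_smul, smul_eq_mul]
    exact Ideal.mul_mem_right _ _ (Ideal.mem_span_singleton_self y)
  · let : Module R[X] M := Module.compHom M (Ideal.Quotient.mk (Ideal.span {f}))
    have : IsScalarTower R[X] (R[X] ⧸ Ideal.span {f}) M :=
      ⟨fun r a m ↦ mul_smul (Ideal.Quotient.mk _ r) a m⟩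
    have : IsScalarTower R R[X] M := .to₁₂₄ R R[X] (R[X] ⧸ Ideal.span {f}) M
    have : Module.Finite R[X] M := .trans (R[X] ⧸ Ideal.span {f}) M
    obtain ⟨n, p, hp⟩ := Module.Finite.exists_fin' R[X] M
    have : Module.Flat R[X] (LinearMap.ker p) := flat_ker_of_flat_coeff hp
    have : Module.FinitePresentation R[X] (LinearMap.ker p) :=
      Module.finitePresentation_of_finite _ _
    have : Module.Projective R[X] (LinearMap.ker p) :=
      Module.Flat.projective_of_finitePresentation
    exact exists_eq_smul_of_projective_ker_of_forall_dual_mem hf hp hy hx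

/-- For `A = ℤ[X]/(f)`, `M` a f.g. `A`-module with no `ℤ`-torsion, `y ∈ A` a
nonzerodivisor and `x ∈ M`: `x ∈ yM` iff `φ(x) ∈ yA` for every `A`-linear `φ : M → A`. -/
theorem stmt_3 (f : Polynomial ℤ) (hf0 : f ≠ 0) (hf1 : f ≠ 1) (hfm1 : f ≠ -1)
    (M : Type) [AddCommGroup M]
    [Module (Polynomial ℤ ⧸ Ideal.span {f}) M]
    (hfg : Module.Finite (Polynomial ℤ ⧸ Ideal.span {f}) M)
    (htf : ∀ (c : ℤ), c ≠ 0 → ∀ m : M, c • m = 0 → m = 0)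
    (y : Polynomial ℤ ⧸ Ideal.span {f})
    (hy : ∀ a : Polynomial ℤ ⧸ Ideal.span {f}, y * a = 0 → a = 0)
    (x : M) :
    (∃ m : M, x = y • m) ↔
      ∀ φ : M →ₗ[Polynomial ℤ ⧸ Ideal.span {f}] (Polynomial ℤ ⧸ Ideal.span {f}),
        φ x ∈ Ideal.span {y} := by
  have : Module.IsTorsionFree ℤ M :=
    .of_smul_eq_zero fun c m h ↦ or_iff_not_imp_left.mpr (htf c · m h)
  exact stmt_3_general (mem_nonZeroDivisors_of_ne_zero hf0) (mem_nonZeroDivisors_iff_left.mpr hy) x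
end
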